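/- (Lemma 'expectedAgeBound_forQ' of the paper, deterministic-schedule form.) Fix reals μ_min and μ* with 0 < μ_min ≤ μ* ≤ 1, let μ : ℤ → ℝ be a schedule (μ_min ≤ μ(s) ≤ μ* for all s), and let L, T be integers with 1 ≤ L ≤ T. Let B = #{t ∈ {L+1, …, T} : μ(s) ≠ μ* for some s ∈ {t−L+1, …, t}} be the number of slots after L that are not preceded by L consecutive uses (up to and including slot t) of the optimal channel. Then ∑_{t=1}^{T} A_μ(t) ≤ L/μ_min + (T−L)/μ* + (T−L)(1−μ*)^{L}/μ_min + B/μ_min. -/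

import Mathlib

open scoped Classical

/-- The expected Age-of-Information at time-slot `t` under a per-slot
success-probability function `μ : ℤ → ℝ`: the series
`A_μ(t) = ∑_{τ=0}^∞ ∏_{i=0}^{τ-1} (1 − μ(t−i))`, where the `τ = 0` term
(the empty product) equals 1. -/
noncomputable def aoi (μ : ℤ → ℝ) (t : ℤ) : ℝ :=
  ∑' τ : ℕ, ∏ i ∈ Finset.range τ, (1 - μ (t - (i : ℤ)))


theorem aoi_term_le (a : ℝ) (ha : 0 < a) (μ : ℤ → ℝ) (hμ : ∀ s : ℤ, a ≤ μ s ∧ μ s ≤ 1)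
    (t : ℤ) (n : ℕ) :
    0 ≤ ∏ i ∈ Finset.range n, (1 - μ (t - (i : ℤ))) ∧
    ∏ i ∈ Finset.range n, (1 - μ (t - (i : ℤ))) ≤ (1 - a) ^ n := by
  constructor
  · exact Finset.prod_nonneg fun i _ => by linarith [(hμ (t - i)).2]
  · calc _ ≤ ∏ i ∈ Finset.range n, (1 - a) :=
        Finset.prod_le_prod (fun i _ => by linarith [(hμ (t - i)).2])
          (fun i _ => by linarith [(hμ (t - i)).1])
      _ = _ := by simp

theorem aoi_summable (a : ℝ) (ha : 0 < a) (μ : ℤ → ℝ) (hμ : ∀ s : ℤ, a ≤ μ s ∧ μ s ≤ 1)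
    (t : ℤ) : Summable fun n : ℕ => ∏ i ∈ Finset.range n, (1 - μ (t - (i : ℤ))) := by
  have h1 : 0 ≤ 1 - a := by linarith [(hμ 0).1, (hμ 0).2]
  exact Summable.of_nonneg_of_le (fun n => (aoi_term_le a ha μ hμ t n).1)
    (fun n => (aoi_term_le a ha μ hμ t n).2)
    (summable_geometric_of_lt_one h1 (by linarith))

theorem aoi_le (a : ℝ) (ha : 0 < a) (μ : ℤ → ℝ) (hμ : ∀ s : ℤ, a ≤ μ s ∧ μ s ≤ 1)
    (t : ℤ) : aoi μ t ≤ 1 / a := by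
  have h1 : 0 ≤ 1 - a := by linarith [(hμ 0).1, (hμ 0).2]
  have h2 := Summable.tsum_le_tsum (fun n => (aoi_term_le a ha μ hμ t n).2)
    (aoi_summable a ha μ hμ t) (summable_geometric_of_lt_one h1 (by linarith))
  rw [tsum_geometric_of_lt_one h1 (by linarith)] at h2
  simpa [aoi] using h2

theorem aoi_good_le (a b : ℝ) (ha : 0 < a) (hb : 0 < b) (hb1 : b ≤ 1)
    (μ : ℤ → ℝ) (hμ : ∀ s : ℤ, a ≤ μ s ∧ μ s ≤ 1)
    (t : ℤ) (L : ℕ) (hg : ∀ i < L, μ (t - (i : ℤ)) = b) :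
    aoi μ t ≤ 1 / b + (1 - b) ^ L / a := by
  have hp : ∀ n ≤ L, ∏ i ∈ Finset.range n, (1 - μ (t - (i : ℤ))) = (1 - b) ^ n := by
    intro n hn
    rw [Finset.prod_congr rfl (g := fun _ => 1 - b)]
    · simp
    · intro i hi
      rw [hg i (by have := Finset.mem_range.1 hi; omega)]
  have h0 : 0 ≤ 1 - b := by linarith
  have e : aoi μ t = ∑ n ∈ Finset.range L, (1 - b) ^ n + (1 - b) ^ L * aoi μ (t - L) := by
    unfold aoi
    rw [← (aoi_summable a ha μ hμ t).sum_add_tsum_nat_add L, ← tsum_mul_left]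
    congr 1
    · exact Finset.sum_congr rfl fun n hn => hp n (Finset.mem_range.1 hn).le
    · refine tsum_congr fun n => ?_
      rw [add_comm n L, Finset.prod_range_add, hp L le_rfl]
      congr 1
      refine Finset.prod_congr rfl fun i _ => ?_
      congr 2
      push_cast
      ring
  have hs : ∑ n ∈ Finset.range L, (1 - b) ^ n ≤ 1 / b := by
    have := (summable_geometric_of_lt_one h0 (by linarith)).sum_le_tsum (Finset.range L)
      (fun n _ => pow_nonneg h0 n)
    rw [tsum_geometric_of_lt_one h0 (by linarith)] at this
    simpa using this
  have hm := mul_le_mul_of_nonneg_left (aoi_le a ha μ hμ (t - L)) (pow_nonneg h0 L)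
  rw [e]
  have : (1 - b) ^ L / a = (1 - b) ^ L * (1 / a) := by ring
  linarith

/-- (Lemma 'expectedAgeBound_forQ', deterministic-schedule form.)
Fix `0 < μ_min ≤ μ* ≤ 1`, let `μ` be a schedule, and let `1 ≤ L ≤ T`.
Let `B` be the number of slots `t ∈ {L+1,…,T}` such that `μ(s) ≠ μ*` for some
`s ∈ {t−L+1,…,t}` (slots not preceded by `L` consecutive uses, up to and
including slot `t`, of the optimal channel). Then
`∑_{t=1}^{T} A_μ(t) ≤ L/μ_min + (T−L)/μ* + (T−L)(1−μ*)^L/μ_min + B/μ_min`. -/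
theorem stmt_13 (μmin μstar : ℝ) (hμmin_pos : 0 < μmin) (hμ_le : μmin ≤ μstar)
    (hμstar_le : μstar ≤ 1)
    (μ : ℤ → ℝ) (hμ : ∀ s : ℤ, μmin ≤ μ s ∧ μ s ≤ μstar)
    (L T : ℕ) (hL : 1 ≤ L) (hLT : L ≤ T)
    (B : ℕ)
    (hB : B = ((Finset.Icc ((L : ℤ) + 1) (T : ℤ)).filter
        (fun t => ∃ s ∈ Finset.Icc (t - (L : ℤ) + 1) t, μ s ≠ μstar)).card) :
    ∑ t ∈ Finset.Icc (1 : ℤ) (T : ℤ), aoi μ t ≤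
      (L : ℝ) / μmin + ((T : ℝ) - L) / μstar +
        ((T : ℝ) - L) * (1 - μstar) ^ L / μmin + (B : ℝ) / μmin := by
  have hμ1 : ∀ s : ℤ, μmin ≤ μ s ∧ μ s ≤ 1 := fun s => ⟨(hμ s).1, (hμ s).2.trans hμstar_le⟩
  have hs : 0 < μstar := lt_of_lt_of_le hμmin_pos hμ_le
  have hq : 0 ≤ (1 - μstar) ^ L := pow_nonneg (by linarith) L
  have hsplit : Finset.Icc (1 : ℤ) (T : ℤ) =
      Finset.Icc (1 : ℤ) (L : ℤ) ∪ Finset.Icc ((L : ℤ) + 1) (T : ℤ) := by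
    ext x
    simp only [Finset.mem_Icc, Finset.mem_union]
    omega
  have hdisj : Disjoint (Finset.Icc (1 : ℤ) (L : ℤ)) (Finset.Icc ((L : ℤ) + 1) (T : ℤ)) := by
    rw [Finset.disjoint_left]
    intro x
    simp only [Finset.mem_Icc]
    omega
  rw [hsplit, Finset.sum_union hdisj]
  have h1 : ∑ t ∈ Finset.Icc (1 : ℤ) (L : ℤ), aoi μ t ≤ (L : ℝ) / μmin := by
    refine (Finset.sum_le_sum fun t _ => aoi_le μmin hμmin_pos μ hμ1 t).trans ?_
    simp [div_eq_mul_inv]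
  have h2 : ∑ t ∈ Finset.Icc ((L : ℤ) + 1) (T : ℤ), aoi μ t ≤
      ∑ t ∈ Finset.Icc ((L : ℤ) + 1) (T : ℤ), ((1 / μstar + (1 - μstar) ^ L / μmin) +
        if ∃ s ∈ Finset.Icc (t - (L : ℤ) + 1) t, μ s ≠ μstar then 1 / μmin else 0) := by
    refine Finset.sum_le_sum fun t _ => ?_
    split_ifs with h
    · have := aoi_le μmin hμmin_pos μ hμ1 t
      have h3 : 0 ≤ 1 / μstar := by positivity
      have h4 : 0 ≤ (1 - μstar) ^ L / μmin := by positivity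
      linarith
    · push Not at h
      have := aoi_good_le μmin μstar hμmin_pos hs hμstar_le μ hμ1 t L
        (fun i hi => h _ (Finset.mem_Icc.2 ⟨by omega, by omega⟩))
      linarith
  have hc : (((Finset.Icc ((L : ℤ) + 1) (T : ℤ)).card : ℕ) : ℝ) = (T : ℝ) - L := by
    rw [Int.card_Icc, ← Nat.cast_sub hLT]
    congr 1
    omega
  rw [Finset.sum_add_distrib, Finset.sum_const, nsmul_eq_mul, hc, ← Finset.sum_filter,
    Finset.sum_const, nsmul_eq_mul] at h2
  have h2' : ∑ t ∈ Finset.Icc ((L : ℤ) + 1) (T : ℤ), aoi μ t ≤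
      ((T : ℝ) - L) * (1 / μstar + (1 - μstar) ^ L / μmin) + (B : ℝ) * (1 / μmin) := by
    rw [hB]
    convert h2
    rfl
  have e : ((T : ℝ) - L) * (1 / μstar + (1 - μstar) ^ L / μmin) + (B : ℝ) * (1 / μmin) =
    ((T : ℝ) - L) / μstar + ((T : ℝ) - L) * (1 - μstar) ^ L / μmin + (B : ℝ) / μmin := by ring
  linarith
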